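/- Let U ⊆ ℝⁿ be a nonempty open set with n ≥ 2, and let λ_1,…,λ_n : U → ℝ be C² functions with pairwise distinct values. For i ≠ j set a_{ij} := ∂_j λ_i / (λ_i − λ_j). Let μ_1,…,μ_n : U → ℝ be C² functions satisfying ∂_j μ_i = a_{ij}(μ_i − μ_j) on U for all i ≠ j. Fix j and let C_j : U → ℝ be a C¹ function; set D := −C_j · ∂_j μ_j and d := −C_j · ∂_j λ_j. If for some i ≠ j the equation (∂_i λ_j)·D + (λ_i − λ_j)·∂_i D = (∂_i μ_j)·d + (μ_i − μ_j)·∂_i d holds on U, then (∂_i C_j)·((λ_i − λ_j)·∂_j μ_j − (μ_i − μ_j)·∂_j λ_j) = 0 on U. -/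

import Mathlib

/-!
Write `L = λ_i − λ_j` and `M = μ_i − μ_j`. Clearing denominators, the linear system says
`L ∂_i μ_j = M ∂_i λ_j` and `L ∂_j μ_i = M ∂_j λ_i` on `U`. Differentiating the first identity in
the direction `j`, the two terms containing `∂_j λ_i` and `∂_j μ_i` cancel by the pair of
identities, which leaves
`∂_i λ_j ∂_j μ_j + L ∂_j ∂_i μ_j = ∂_i μ_j ∂_j λ_j + M ∂_j ∂_i λ_j`.
After exchanging partial derivatives (`pd_comm`), this is precisely the statement that the
coefficient of the undifferentiated `C` vanishes when the integrability equation is expanded by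
the Leibniz rule (`pd_mul`). What is left is the term with `∂_i C`.
-/

/-- Partial derivative in the `i`-th coordinate direction. -/
noncomputable def pd {n : ℕ} (i : Fin n) (f : (Fin n → ℝ) → ℝ) (x : Fin n → ℝ) : ℝ :=
  fderiv ℝ f x (Pi.single i 1)

theorem pd_mul {n : ℕ} (i : Fin n) {f g : (Fin n → ℝ) → ℝ} {x : Fin n → ℝ}
    (hf : DifferentiableAt ℝ f x) (hg : DifferentiableAt ℝ g x) :
    pd i (fun y => f y * g y) x = pd i f x * g x + f x * pd i g x := by
  unfold pd
  rw [fderiv_fun_mul hf hg]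
  simp only [add_apply, smul_apply, smul_eq_mul]
  ring

theorem pd_sub {n : ℕ} (i : Fin n) {f g : (Fin n → ℝ) → ℝ} {x : Fin n → ℝ}
    (hf : DifferentiableAt ℝ f x) (hg : DifferentiableAt ℝ g x) :
    pd i (fun y => f y - g y) x = pd i f x - pd i g x := by
  unfold pd
  rw [fderiv_fun_sub hf hg]
  rfl

theorem pd_neg {n : ℕ} (i : Fin n) (f : (Fin n → ℝ) → ℝ) (x : Fin n → ℝ) :
    pd i (fun y => -f y) x = -pd i f x := by
  unfold pd
  rw [fderiv_fun_neg]
  rfl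

theorem pd_congr {n : ℕ} (i : Fin n) {f g : (Fin n → ℝ) → ℝ} {U : Set (Fin n → ℝ)}
    (hU : IsOpen U) (h : ∀ y ∈ U, f y = g y) {x : Fin n → ℝ} (hx : x ∈ U) : pd i f x = pd i g x := by
  have hfg : f =ᶠ[nhds x] g := Filter.eventually_of_mem (hU.mem_nhds hx) h
  unfold pd
  rw [hfg.fderiv_eq]

theorem differentiableAt_fderiv {n : ℕ} {f : (Fin n → ℝ) → ℝ} {x : Fin n → ℝ}
    (hf : ContDiffAt ℝ 2 f x) : DifferentiableAt ℝ (fderiv ℝ f) x :=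
  (hf.fderiv_right (m := 1) (by norm_num)).differentiableAt (by norm_num)

theorem differentiableAt_pd {n : ℕ} (i : Fin n) {f : (Fin n → ℝ) → ℝ} {x : Fin n → ℝ}
    (hf : ContDiffAt ℝ 2 f x) : DifferentiableAt ℝ (pd i f) x :=
  (differentiableAt_fderiv hf).clm_apply (differentiableAt_const _)

theorem pd_pd {n : ℕ} (i j : Fin n) {f : (Fin n → ℝ) → ℝ} {x : Fin n → ℝ}
    (hf : ContDiffAt ℝ 2 f x) :
    pd i (pd j f) x = fderiv ℝ (fderiv ℝ f) x (Pi.single i 1) (Pi.single j 1) := by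
  change fderiv ℝ (fun y => fderiv ℝ f y (Pi.single j 1)) x (Pi.single i 1) = _
  rw [fderiv_clm_apply (differentiableAt_fderiv hf) (differentiableAt_const _)]
  simp

/-- Schwarz: the second derivative of a `C²` function is symmetric. -/
theorem pd_comm {n : ℕ} (i j : Fin n) {f : (Fin n → ℝ) → ℝ} {x : Fin n → ℝ}
    (hf : ContDiffAt ℝ 2 f x) :
    pd i (pd j f) x = pd j (pd i f) x := by
  rw [pd_pd i j hf, pd_pd j i hf]
  exact hf.isSymmSndFDerivAt (by simp) _ _

/-- The diagonal-coefficient lemma: the second-order integrability equation for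
`D = −C_j ∂_j μ_j`, `d = −C_j ∂_j λ_j` forces
`(∂_i C_j)((λ_i − λ_j) ∂_j μ_j − (μ_i − μ_j) ∂_j λ_j) = 0`. -/
theorem stmt_9 {n : ℕ} (hn : 2 ≤ n) (U : Set (Fin n → ℝ)) (hUopen : IsOpen U)
    (hUne : U.Nonempty)
    (lam : Fin n → (Fin n → ℝ) → ℝ)
    (hlam : ∀ i : Fin n, ContDiffOn ℝ 2 (lam i) U)
    (hdist : ∀ i j : Fin n, i ≠ j → ∀ x ∈ U, lam i x ≠ lam j x)
    (μ : Fin n → (Fin n → ℝ) → ℝ)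
    (hμ : ∀ i : Fin n, ContDiffOn ℝ 2 (μ i) U)
    (hsys : ∀ i j : Fin n, i ≠ j → ∀ x ∈ U,
      pd j (μ i) x = (pd j (lam i) x / (lam i x - lam j x)) * (μ i x - μ j x))
    (j : Fin n) (C : (Fin n → ℝ) → ℝ) (hC : ContDiffOn ℝ 1 C U)
    (i : Fin n) (hij : i ≠ j)
    (heq : ∀ x ∈ U,
      pd i (lam j) x * (-(C x) * pd j (μ j) x)
        + (lam i x - lam j x) * pd i (fun y => -(C y) * pd j (μ j) y) x
      = pd i (μ j) x * (-(C x) * pd j (lam j) x)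
        + (μ i x - μ j x) * pd i (fun y => -(C y) * pd j (lam j) y) x) :
    ∀ x ∈ U,
      pd i C x * ((lam i x - lam j x) * pd j (μ j) x - (μ i x - μ j x) * pd j (lam j) x)
        = 0 := by
  intro x hx
  have hnhds := hUopen.mem_nhds hx
  have cl : ∀ k, ContDiffAt ℝ 2 (lam k) x := fun k => (hlam k).contDiffAt hnhds
  have cm : ∀ k, ContDiffAt ℝ 2 (μ k) x := fun k => (hμ k).contDiffAt hnhds
  have dl : ∀ k, DifferentiableAt ℝ (lam k) x := fun k => (cl k).differentiableAt (by norm_num)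
  have dm : ∀ k, DifferentiableAt ℝ (μ k) x := fun k => (cm k).differentiableAt (by norm_num)
  have dC : DifferentiableAt ℝ C x := (hC.contDiffAt hnhds).differentiableAt (by norm_num)
  have hL : lam i x - lam j x ≠ 0 := sub_ne_zero.2 (hdist i j hij x hx)
  have hsys_ji : ∀ y ∈ U,
      (lam i y - lam j y) * pd i (μ j) y = (μ i y - μ j y) * pd i (lam j) y := by
    intro y hy
    have h : lam j y - lam i y ≠ 0 := sub_ne_zero.2 (hdist j i hij.symm y hy)
    rw [hsys j i hij.symm y hy]
    field_simp
    ring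
  have hsys_ij : (lam i x - lam j x) * pd j (μ i) x = (μ i x - μ j x) * pd j (lam i) x := by
    rw [hsys i j hij x hx]
    field_simp
  -- the identity holds on the whole open set, so it may be differentiated in the direction `j`
  have hdiff := pd_congr j hUopen hsys_ji hx
  rw [pd_mul j ((dl i).fun_sub (dl j)) (differentiableAt_pd i (cm j)),
    pd_mul j ((dm i).fun_sub (dm j)) (differentiableAt_pd i (cl j)),
    pd_sub j (dl i) (dl j), pd_sub j (dm i) (dm j)] at hdiff
  -- both sides equal `L⁻¹ M ∂_j λ_i ∂_i λ_j`, so these terms of `hdiff` cancel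
  have hcross : pd j (lam i) x * pd i (μ j) x = pd j (μ i) x * pd i (lam j) x := by
    apply mul_left_cancel₀ hL
    linear_combination pd j (lam i) x * hsys_ji x hx - pd i (lam j) x * hsys_ij
  have h := heq x hx
  rw [pd_mul i dC.fun_neg (differentiableAt_pd j (cm j)),
    pd_mul i dC.fun_neg (differentiableAt_pd j (cl j)), pd_neg,
    pd_comm i j (cm j), pd_comm i j (cl j)] at h
  linear_combination -h - C x * (hdiff - hcross)
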